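/- Let λ ∈ ℂ* and z ∈ ℂ. The slope field g(x) = (((1−λ)/2)·e^{(1+λ)x} + z·((1+λ)/2)·eˣ) / (e^{λx} + z), defined (independently of y) where e^{λx} + z ≠ 0, satisfies dg/dx = ((1 − λ²)/4)·eˣ + e^{−x}·g² at every point of its domain. Hence the pencil of foliations ω_z = e^{λx}[dy − ((1−λ)/2)eˣdx] + z[dy − ((1+λ)/2)eˣdx], z ∈ ℙ¹, is a pencil of geodesic foliations for the projective structure y'' = ((1−λ²)/4)·eˣ + e^{−x}(y')². -/

import Mathlib

/-!
The equation `g' = A + C g²` is a Riccati equation, and `g` is the average, with weights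
`e^{λx}` and `z`, of its solutions `g₀ = ((1 - λ)/2) eˣ` and `g₁ = ((1 + λ)/2) eˣ`. For two
solutions of any Riccati equation with quadratic coefficient `C`, averaging commutes with the affine
part of the right-hand side, and the average of the squares exceeds the square of the average by the
variance `w z (g₁ - g₀)² / (w + z)²`. The derivative of the weight `w` compensates this excess as
soon as `w' = C (g₁ - g₀) w`; here `C (g₁ - g₀) = e^{-x} · λ eˣ = λ`, whence `w = e^{λx}`.
-/

section PencilSlope

/-- The slope `dy/dx` of the kernel of the member `w (dy - g₀ dx) + z (dy - g₁ dx)` of the pencil of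
1-forms spanned by `w (dy - g₀ dx)` and `dy - g₁ dx`, with all coefficients evaluated at one point.
It is the average of `g₀` and `g₁` with weights `w` and `z`, and has the junk value `0` where
`w + z = 0`, i.e. where the kernel is vertical or everything. -/
def pencilSlope {𝕜 : Type*} [Field 𝕜] (w g₀ g₁ z : 𝕜) : 𝕜 :=
  (w * g₀ + z * g₁) / (w + z)

section Field

variable {𝕜 : Type*} [Field 𝕜] {w z : 𝕜}

theorem pencilSlope_quadratic (hwz : w + z ≠ 0) (a b c g₀ g₁ : 𝕜) :
    pencilSlope w (a + b * g₀ + c * g₀ ^ 2) (a + b * g₁ + c * g₁ ^ 2) z =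
      a + b * pencilSlope w g₀ g₁ z + c * pencilSlope w (g₀ ^ 2) (g₁ ^ 2) z := by
  simp only [pencilSlope]
  field_simp
  ring

theorem pencilSlope_sq (hwz : w + z ≠ 0) (g₀ g₁ : 𝕜) :
    pencilSlope w (g₀ ^ 2) (g₁ ^ 2) z =
      pencilSlope w g₀ g₁ z ^ 2 + w * z * (g₁ - g₀) ^ 2 / (w + z) ^ 2 := by
  simp only [pencilSlope]
  field_simp
  ring

end Field

variable {𝕜 : Type*} [NontriviallyNormedField 𝕜] {w g₀ g₁ : 𝕜 → 𝕜} {x z : 𝕜}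

theorem hasDerivAt_pencilSlope {w' g₀' g₁' : 𝕜} (hw : HasDerivAt w w' x)
    (hg₀ : HasDerivAt g₀ g₀' x) (hg₁ : HasDerivAt g₁ g₁' x) (hwz : w x + z ≠ 0) :
    HasDerivAt (fun t => pencilSlope (w t) (g₀ t) (g₁ t) z)
      (pencilSlope (w x) g₀' g₁' z - w' * z * (g₁ x - g₀ x) / (w x + z) ^ 2) x := by
  refine (((hw.fun_mul hg₀).fun_add (hg₁.const_mul z)).fun_div (hw.add_const z) hwz).congr_deriv ?_
  simp only [pencilSlope]
  field_simp
  ring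

theorem hasDerivAt_pencilSlope_of_riccati {a b c : 𝕜}
    (hg₀ : HasDerivAt g₀ (a + b * g₀ x + c * g₀ x ^ 2) x)
    (hg₁ : HasDerivAt g₁ (a + b * g₁ x + c * g₁ x ^ 2) x)
    (hw : HasDerivAt w (c * (g₁ x - g₀ x) * w x) x) (hwz : w x + z ≠ 0) :
    HasDerivAt (fun t => pencilSlope (w t) (g₀ t) (g₁ t) z)
      (a + b * pencilSlope (w x) (g₀ x) (g₁ x) z +
        c * pencilSlope (w x) (g₀ x) (g₁ x) z ^ 2) x := by
  refine (hasDerivAt_pencilSlope hw hg₀ hg₁ hwz).congr_deriv ?_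
  rw [pencilSlope_quadratic hwz, pencilSlope_sq hwz]
  ring

end PencilSlope

theorem cexp_neg_mul_cexp (x : ℂ) : Complex.exp (-x) * Complex.exp x = 1 := by
  rw [← Complex.exp_add, neg_add_cancel, Complex.exp_zero]

theorem hasDerivAt_const_mul_cexp_of_eq_add_sq {c μ : ℂ} (hμ : μ = c + μ ^ 2) (x : ℂ) :
    HasDerivAt (fun t => μ * Complex.exp t)
      (c * Complex.exp x + Complex.exp (-x) * (μ * Complex.exp x) ^ 2) x := by
  refine ((Complex.hasDerivAt_exp x).const_mul μ).congr_deriv ?_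
  linear_combination Complex.exp x * hμ - μ ^ 2 * Complex.exp x * cexp_neg_mul_cexp x

theorem hasDerivAt_cexp_sub_mul (μ ν x : ℂ) :
    HasDerivAt (fun t => Complex.exp ((ν - μ) * t))
      (Complex.exp (-x) * (ν * Complex.exp x - μ * Complex.exp x) *
        Complex.exp ((ν - μ) * x)) x := by
  refine (hasDerivAt_const_mul (ν - μ)).cexp.congr_deriv ?_
  linear_combination -(ν - μ) * Complex.exp ((ν - μ) * x) * cexp_neg_mul_cexp x

theorem hasDerivAt_pencilSlope_cexp {c μ ν x z : ℂ} (hμ : μ = c + μ ^ 2) (hν : ν = c + ν ^ 2)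
    (hz : Complex.exp ((ν - μ) * x) + z ≠ 0) :
    HasDerivAt
      (fun t => pencilSlope (Complex.exp ((ν - μ) * t)) (μ * Complex.exp t) (ν * Complex.exp t) z)
      (c * Complex.exp x + Complex.exp (-x) *
        pencilSlope (Complex.exp ((ν - μ) * x)) (μ * Complex.exp x) (ν * Complex.exp x) z ^ 2)
      x := by
  have hg₀ := hasDerivAt_const_mul_cexp_of_eq_add_sq hμ x
  have hg₁ := hasDerivAt_const_mul_cexp_of_eq_add_sq hν x
  have hw := hasDerivAt_cexp_sub_mul μ ν x
  refine (hasDerivAt_pencilSlope_of_riccati (a := c * Complex.exp x) (b := 0)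
    (hg₀.congr_deriv ?_) (hg₁.congr_deriv ?_) hw hz).congr_deriv ?_ <;>
  rw [zero_mul, add_zero]

theorem pencilSlope_cexp_eq_div (lam μ ν z x : ℂ) :
    pencilSlope (Complex.exp (lam * x)) (μ * Complex.exp x) (ν * Complex.exp x) z =
      (μ * Complex.exp ((1 + lam) * x) + z * ν * Complex.exp x) / (Complex.exp (lam * x) + z) := by
  rw [pencilSlope, add_mul, one_mul, Complex.exp_add]
  ring

/-- For `λ ∈ ℂ*`, the slope field
`g(x) = (((1−λ)/2)e^{(1+λ)x} + z((1+λ)/2)eˣ)/(e^{λx} + z)` satisfies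
`dg/dx = ((1 − λ²)/4)eˣ + e^{−x}g²` wherever `e^{λx} + z ≠ 0`:
the pencil `ω_z = e^{λx}[dy − ((1−λ)/2)eˣdx] + z[dy − ((1+λ)/2)eˣdx]`
is geodesic for `y'' = ((1−λ²)/4)eˣ + e^{−x}(y')²`. -/
theorem flat_pencil_geodesic_iib1 (lam z : ℂ) (hlam : lam ≠ 0) :
    ∀ x : ℂ, Complex.exp (lam * x) + z ≠ 0 →
      HasDerivAt
        (fun x' : ℂ =>
          (((1 - lam) / 2) * Complex.exp ((1 + lam) * x')
              + z * ((1 + lam) / 2) * Complex.exp x') /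
            (Complex.exp (lam * x') + z))
        (((1 - lam ^ 2) / 4) * Complex.exp x
          + Complex.exp (-x) *
            ((((1 - lam) / 2) * Complex.exp ((1 + lam) * x)
                + z * ((1 + lam) / 2) * Complex.exp x) /
              (Complex.exp (lam * x) + z)) ^ 2) x := by
  intro x hx
  have hμ : (1 - lam) / 2 = (1 - lam ^ 2) / 4 + ((1 - lam) / 2) ^ 2 := by ring
  have hν : (1 + lam) / 2 = (1 - lam ^ 2) / 4 + ((1 + lam) / 2) ^ 2 := by ring
  have hsub : (1 + lam) / 2 - (1 - lam) / 2 = lam := by ring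
  simpa only [hsub, pencilSlope_cexp_eq_div] using
    hasDerivAt_pencilSlope_cexp hμ hν (by rwa [hsub])
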